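/- Let K be a ℤ-graded module over a field k of characteristic zero and let [·,·] be a k-bilinear bracket on graded endomorphisms of K which sends a pair of endomorphisms of degrees i and j to an endomorphism of degree i+j+f, where f is an even integer. Assume that for all homogeneous graded endomorphisms F, G, H: (antisymmetry) [F,G] = −(−1)^{(|F|+f)(|G|+f)}[G,F]; (graded Jacobi) [F,[G,H]] = [[F,G],H] + (−1)^{(|F|+f)(|G|+f)}[G,[F,H]]; (derivation rule) [F, G∘H] = [F,G]∘H + (−1)^{(|F|+f)|G|} G∘[F,H]. Let δ be a homogeneous graded endomorphism of odd degree |δ| with [δ,δ] = 0. Then the derived bracket [F,G]_δ := [[F,δ],G] satisfies, for all homogeneous F, G, H: (graded Jacobi with shift f+|δ|) [F,[G,H]_δ]_δ = [[F,G]_δ,H]_δ + (−1)^{(|F|+f+|δ|)(|G|+f+|δ|)}[G,[F,H]_δ]_δ, and (derivation rule with shift f+|δ|) [F, G∘H]_δ = [F,G]_δ∘H + (−1)^{(|F|+f+|δ|)|G|} G∘[F,H]_δ. -/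

import Mathlib

/-- `F` is a graded endomorphism of degree `d` with respect to the grading `𝒜`:
it is linear and maps `𝒜 i` into `𝒜 (i + d)` for every `i`. -/
def IsGradedEnd {k K : Type*} [Field k] [AddCommGroup K] [Module k K]
    (𝒜 : ℤ → Submodule k K) (F : Module.End k K) (d : ℤ) : Prop :=
  ∀ i : ℤ, (𝒜 i).map F ≤ 𝒜 (i + d)

/-!
Write `s` for the shift and call `i + s` the shifted degree of an element of degree `i`. The Jacobi
identity says that `[[F, G], ·]` is the graded commutator of `[F, ·]` and `[G, ·]` with respect to
shifted degrees. If `δ` has odd shifted degree and `[δ, δ] = 0`, then `[δ, ·]² = 0`, so taking the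
graded commutator with `[δ, ·]` twice gives zero: `[[[F, δ], δ], ·] = 0`. This is exactly the
obstruction to `[[F, δ], [G, δ]]` and `[[[F, δ], G], δ]` acting in the same way, and once they do,
the Jacobi identity for `[F, δ]` and `[G, δ]` is the Jacobi identity for the derived bracket.
-/

section LodayBracket

variable {R L : Type*} [CommSemiring R] [AddCommGroup L] [Module R L]

/-- A graded Loday bracket of degree `s`: a bilinear bracket satisfying the graded Jacobi identity
in Leibniz form, with degree shift `s`; no antisymmetry is imposed. The grading enters only through
the predicate `HasDegree F i`, so that it need not come from a decomposition of `L`; an element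
may have several degrees. -/
structure IsLodayBracket (HasDegree : L → ℤ → Prop) (br : L →ₗ[R] L →ₗ[R] L) (s : ℤ) : Prop where
  hasDegree_bracket {F G : L} {i j : ℤ} :
    HasDegree F i → HasDegree G j → HasDegree (br F G) (i + j + s)
  jacobi {F G H : L} {i j l : ℤ} : HasDegree F i → HasDegree G j → HasDegree H l →
    br F (br G H) = br (br F G) H + ((i + s) * (j + s)).negOnePow • br G (br F H)

/-- The derived bracket `[F, G]_δ = [[F, δ], G]`. -/
def derivedBracket (br : L →ₗ[R] L →ₗ[R] L) (δ : L) : L →ₗ[R] L →ₗ[R] L :=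
  br ∘ₗ br.flip δ

@[simp]
theorem derivedBracket_apply (br : L →ₗ[R] L →ₗ[R] L) (δ F G : L) :
    derivedBracket br δ F G = br (br F δ) G :=
  rfl

namespace IsLodayBracket

variable {HasDegree : L → ℤ → Prop} {br : L →ₗ[R] L →ₗ[R] L} {s : ℤ}

theorem bracket_bracket_left (hbr : IsLodayBracket HasDegree br s) {F G H : L} {i j l : ℤ}
    (hF : HasDegree F i) (hG : HasDegree G j) (hH : HasDegree H l) :
    br (br F G) H = br F (br G H) - ((i + s) * (j + s)).negOnePow • br G (br F H) :=
  eq_sub_of_add_eq (hbr.jacobi hF hG hH).symm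

theorem bracket_bracket_of_bracket_self_eq_zero (hbr : IsLodayBracket HasDegree br s)
    (h2 : IsSMulRegular L (2 : R)) {δ H : L} {d l : ℤ} (hδ : HasDegree δ d) (hd : Odd (d + s))
    (hδδ : br δ δ = 0) (hH : HasDegree H l) :
    br δ (br δ H) = 0 := by
  have h := hbr.jacobi hδ hδ hH
  rw [hδδ, map_zero, LinearMap.zero_apply, zero_add, Int.negOnePow_mul_self,
    Int.negOnePow_odd _ hd, Units.neg_smul, one_smul] at h
  refine h2.right_eq_zero_of_smul ?_
  rw [two_smul]
  exact eq_neg_iff_add_eq_zero.mp h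

theorem bracket_derivedBracket_self_eq_zero (hbr : IsLodayBracket HasDegree br s)
    (h2 : IsSMulRegular L (2 : R)) {δ F H : L} {d i l : ℤ} (hδ : HasDegree δ d)
    (hd : Odd (d + s)) (hδδ : br δ δ = 0) (hF : HasDegree F i) (hH : HasDegree H l) :
    br (derivedBracket br δ F δ) H = 0 := by
  set ε := ((i + s) * (d + s)).negOnePow
  have hsign : ((i + d + s + s) * (d + s)).negOnePow = -ε := by
    rw [show (i + d + s + s) * (d + s) = (i + s) * (d + s) + (d + s) * (d + s) by ring,
      Int.negOnePow_add, Int.negOnePow_mul_self, Int.negOnePow_odd _ hd, mul_neg_one]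
  have hδH : br δ (br δ H) = 0 := hbr.bracket_bracket_of_bracket_self_eq_zero h2 hδ hd hδδ hH
  have hδFH : br δ (br δ (br F H)) = 0 :=
    hbr.bracket_bracket_of_bracket_self_eq_zero h2 hδ hd hδδ (hbr.hasDegree_bracket hF hH)
  have hleft : br (br F δ) (br δ H) = -(ε • br δ (br F (br δ H))) := by
    rw [hbr.bracket_bracket_left hF hδ (hbr.hasDegree_bracket hδ hH), hδH, map_zero, zero_sub]
  have hright : br δ (br (br F δ) H) = br δ (br F (br δ H)) := by
    rw [hbr.bracket_bracket_left hF hδ hH, map_sub, Units.smul_def, map_zsmul, hδFH, smul_zero,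
      sub_zero]
  rw [derivedBracket_apply, hbr.bracket_bracket_left (hbr.hasDegree_bracket hF hδ) hδ hH, hsign,
    hleft, hright, Units.neg_smul, sub_neg_eq_add, neg_add_cancel]

theorem derivedBracket_derivedBracket_left (hbr : IsLodayBracket HasDegree br s)
    (h2 : IsSMulRegular L (2 : R)) {δ F G H : L} {d i j l : ℤ} (hδ : HasDegree δ d)
    (hd : Odd (d + s)) (hδδ : br δ δ = 0) (hF : HasDegree F i) (hG : HasDegree G j)
    (hH : HasDegree H l) :
    derivedBracket br δ (derivedBracket br δ F G) H = br (br (br F δ) (br G δ)) H := by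
  have hFδ := hbr.hasDegree_bracket hF hδ
  have hzero {X : L} {m : ℤ} (hX : HasDegree X m) : br (br (br F δ) δ) X = 0 :=
    hbr.bracket_derivedBracket_self_eq_zero h2 hδ hd hδδ hF hX
  have hcross : br (br G (br (br F δ) δ)) H = 0 := by
    rw [hbr.bracket_bracket_left hG (hbr.hasDegree_bracket hFδ hδ) hH, hzero hH,
      hzero (hbr.hasDegree_bracket hG hH), map_zero, smul_zero, sub_zero]
  rw [derivedBracket_apply, derivedBracket_apply, hbr.jacobi hFδ hG hδ, map_add,
    LinearMap.add_apply, Units.smul_def, map_zsmul, LinearMap.smul_apply, hcross, smul_zero,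
    add_zero]

protected theorem derivedBracket (hbr : IsLodayBracket HasDegree br s)
    (h2 : IsSMulRegular L (2 : R)) {δ : L} {d : ℤ} (hδ : HasDegree δ d) (hd : Odd (d + s))
    (hδδ : br δ δ = 0) :
    IsLodayBracket HasDegree (derivedBracket br δ) (2 * s + d) where
  hasDegree_bracket {F G i j} hF hG := by
    rw [show i + j + (2 * s + d) = i + d + s + j + s by ring]
    exact hbr.hasDegree_bracket (hbr.hasDegree_bracket hF hδ) hG
  jacobi {F G H i j l} hF hG hH := by
    have h := hbr.jacobi (hbr.hasDegree_bracket hF hδ) (hbr.hasDegree_bracket hG hδ) hH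
    rw [← hbr.derivedBracket_derivedBracket_left h2 hδ hd hδδ hF hG hH] at h
    rw [show i + (2 * s + d) = i + d + s + s by ring, show j + (2 * s + d) = j + d + s + s by ring]
    exact h

end IsLodayBracket

end LodayBracket

section LeibnizBracket

variable {R A : Type*} [CommSemiring R] [NonUnitalNonAssocRing A] [Module R A]

/-- A Leibniz bracket of degree `s`: a graded Loday bracket whose left multiplications are graded
derivations of the product. The derivation sign involves the unshifted degree of the second
argument, since the product itself has degree `0`. -/
structure IsLeibnizBracket (HasDegree : A → ℤ → Prop) (br : A →ₗ[R] A →ₗ[R] A) (s : ℤ) : Prop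
    extends IsLodayBracket HasDegree br s where
  bracket_mul {F G H : A} {i j l : ℤ} : HasDegree F i → HasDegree G j → HasDegree H l →
    br F (G * H) = br F G * H + ((i + s) * j).negOnePow • (G * br F H)

variable {HasDegree : A → ℤ → Prop} {br : A →ₗ[R] A →ₗ[R] A} {s : ℤ}

theorem derived_bracket_is_leibniz_general (hbr : IsLeibnizBracket HasDegree br s)
    (h2 : IsSMulRegular A (2 : R)) {δ : A} {d : ℤ} (hδ : HasDegree δ d) (hd : Odd (d + s))
    (hδδ : br δ δ = 0) :
    IsLeibnizBracket HasDegree (derivedBracket br δ) (2 * s + d) where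
  toIsLodayBracket := hbr.toIsLodayBracket.derivedBracket h2 hδ hd hδδ
  bracket_mul {F G H i j l} hF hG hH := by
    rw [show i + (2 * s + d) = i + d + s + s by ring]
    exact hbr.bracket_mul (hbr.hasDegree_bracket hF hδ) hG hH

end LeibnizBracket

theorem negOnePow_mul_congr {a b c d : ℤ} (hab : Even (a - b)) (hcd : Even (c - d)) :
    (a * c).negOnePow = (b * d).negOnePow := by
  rw [Int.negOnePow_eq_iff, show a * c - b * d = (a - b) * c + b * (c - d) by ring]
  exact (hab.mul_right c).add (hcd.mul_left b)

/-- a Leibniz bracket of even degree `f` on the graded endomorphisms of a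
ℤ-graded module, together with a square-zero element `δ` of odd degree, yields a derived
bracket `[F,G]_δ = [[F,δ],G]` which again satisfies the graded Jacobi identity and the
derivation rule, with degree shift `f + |δ|`. -/
theorem derived_bracket_is_leibniz
    (k : Type*) [Field k] [CharZero k]
    (K : Type*) [AddCommGroup K] [Module k K]
    (𝒜 : ℤ → Submodule k K) (hK : DirectSum.IsInternal 𝒜)
    (br : Module.End k K →ₗ[k] Module.End k K →ₗ[k] Module.End k K)
    (f : ℤ) (hf : Even f)
    (hdeg : ∀ F G : Module.End k K, ∀ i j : ℤ,
      IsGradedEnd 𝒜 F i → IsGradedEnd 𝒜 G j → IsGradedEnd 𝒜 (br F G) (i + j + f))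
    (hanti : ∀ F G : Module.End k K, ∀ i j : ℤ,
      IsGradedEnd 𝒜 F i → IsGradedEnd 𝒜 G j →
      br F G = -(((Int.negOnePow ((i + f) * (j + f))) : ℤ) • br G F))
    (hjac : ∀ F G H : Module.End k K, ∀ i j l : ℤ,
      IsGradedEnd 𝒜 F i → IsGradedEnd 𝒜 G j → IsGradedEnd 𝒜 H l →
      br F (br G H) =
        br (br F G) H + ((Int.negOnePow ((i + f) * (j + f))) : ℤ) • br G (br F H))
    (hder : ∀ F G H : Module.End k K, ∀ i j l : ℤ,
      IsGradedEnd 𝒜 F i → IsGradedEnd 𝒜 G j → IsGradedEnd 𝒜 H l →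
      br F (G * H) = br F G * H + ((Int.negOnePow ((i + f) * j)) : ℤ) • (G * br F H))
    (δ : Module.End k K) (dδ : ℤ) (hδ : IsGradedEnd 𝒜 δ dδ) (hδodd : Odd dδ)
    (hδδ : br δ δ = 0) :
    (∀ F G H : Module.End k K, ∀ i j l : ℤ,
      IsGradedEnd 𝒜 F i → IsGradedEnd 𝒜 G j → IsGradedEnd 𝒜 H l →
      br (br F δ) (br (br G δ) H) =
        br (br (br (br F δ) G) δ) H +
          ((Int.negOnePow ((i + f + dδ) * (j + f + dδ))) : ℤ) •
            br (br G δ) (br (br F δ) H)) ∧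
    (∀ F G H : Module.End k K, ∀ i j l : ℤ,
      IsGradedEnd 𝒜 F i → IsGradedEnd 𝒜 G j → IsGradedEnd 𝒜 H l →
      br (br F δ) (G * H) =
        br (br F δ) G * H +
          ((Int.negOnePow ((i + f + dδ) * j)) : ℤ) • (G * br (br F δ) H)) := by
  have hbr : IsLeibnizBracket (IsGradedEnd 𝒜) br f :=
    { hasDegree_bracket := hdeg _ _ _ _
      jacobi := hjac _ _ _ _ _ _
      bracket_mul := hder _ _ _ _ _ _ }
  have hδbr := derived_bracket_is_leibniz_general hbr (.of_ne_zero two_ne_zero) hδ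
    (hδodd.add_even hf) hδδ
  -- The derived bracket has degree `2 * f + dδ`, which is congruent to `f + dδ` mod 2.
  have hshift (i : ℤ) : Even (i + (2 * f + dδ) - (i + f + dδ)) := by
    rwa [show i + (2 * f + dδ) - (i + f + dδ) = f by ring]
  refine ⟨fun F G H i j l hF hG hH ↦ ?_, fun F G H i j l hF hG hH ↦ ?_⟩
  · rw [← negOnePow_mul_congr (hshift i) (hshift j)]
    exact hδbr.jacobi hF hG hH
  · rw [← negOnePow_mul_congr (hshift i) (by simp : Even (j - j))]
    exact hδbr.bracket_mul hF hG hH
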